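/- The determinant det(K_B) ∈ F[x_{b,j} : b ∈ B, j ∈ {0,…,s−1}] is a homogeneous polynomial of total degree s·t·(t−1)/2, and the coefficient of the monomial Π_{c=1}^{t} Π_{j=0}^{s−1} x_{b_c,j}^{c−1} in det(K_B) is nonzero; in particular det(K_B) is a nonzero polynomial. -/

import Mathlib

open Matrix MvPolynomial

/-- The `m`-th smallest element of the finite set `B ⊆ ℕ` (junk value `0` if `m ≥ |B|`). -/
def enum (B : Finset ℕ) (m : ℕ) : ℕ := (B.sort (· ≤ ·)).getD m 0

/-- The `z`-th entry of the `(i,j)` block (a length-`t` column vector) of the generic kernel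
matrix `K_b` over `F[x_{b,j}]`: it is `x_{b,j}^z` if `i = j`, `−x_{b,j}^z` if `i = b ≠ j`,
and `0` otherwise. -/
noncomputable def KentPoly (F : Type*) [Field F] (b i j z : ℕ) : MvPolynomial (ℕ × ℕ) F :=
  if i = j then (X (b, j)) ^ z
  else if i = b ∧ i ≠ j then -((X (b, j)) ^ z)
  else 0

/-- The `st × st` matrix `K_B = [K_{b₁} | ⋯ | K_{b_t}]` over the polynomial ring
`F[x_{b,j} : b ∈ B, j ∈ [s]]` (with `t = |B|`): row `ρ` encodes block row `ρ / t` and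
inner row `ρ % t`; column `κ` selects the `κ / s`-th member of `B` and inner column
`κ % s`. -/
noncomputable def KpolyB (F : Type*) [Field F] (s : ℕ) (B : Finset ℕ) :
    Matrix (Fin (s * B.card)) (Fin (s * B.card)) (MvPolynomial (ℕ × ℕ) F) :=
  Matrix.of fun ρ κ =>
    KentPoly F (enum B ((κ : ℕ) / s)) ((ρ : ℕ) / B.card) ((κ : ℕ) % s) ((ρ : ℕ) % B.card)

lemma enum_eq (B : Finset ℕ) {m : ℕ} (h : m < B.card) :
    enum B m = (B.sort (· ≤ ·))[m]'(by simpa using h) := by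
  unfold enum
  rw [List.getD_eq_getElem]

lemma enum_mem (B : Finset ℕ) {m : ℕ} (h : m < B.card) : enum B m ∈ B := by
  rw [enum_eq B h, ← Finset.mem_sort (· ≤ ·)]
  exact List.getElem_mem _

lemma enum_inj (B : Finset ℕ) {m n : ℕ} (h : m < B.card) (h' : n < B.card)
    (e : enum B m = enum B n) : m = n := by
  rw [enum_eq B h, enum_eq B h'] at e
  exact ((Finset.sort_nodup B (· ≤ ·)).getElem_inj_iff).1 e

/-- The scalar coefficient. -/
def kcoef (F : Type*) [Field F] (b i j : ℕ) : F :=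
  if i = j then 1 else if i = b then -1 else 0

lemma KentPoly_eq (F : Type*) [Field F] (b i j z : ℕ) :
    KentPoly F b i j z = monomial (Finsupp.single (b, j) z) (kcoef F b i j) := by
  unfold KentPoly kcoef
  split_ifs <;> simp_all [X_pow_eq_monomial]

lemma det_expand (F : Type*) [Field F] (s : ℕ) (B : Finset ℕ) :
    (KpolyB F s B).det = ∑ σ : Equiv.Perm (Fin (s * B.card)),
      monomial (∑ κ : Fin (s * B.card),
        Finsupp.single (enum B ((κ : ℕ) / s), (κ : ℕ) % s) ((σ κ : ℕ) % B.card))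
      (((Equiv.Perm.sign σ : ℤ) : F) * ∏ κ : Fin (s * B.card),
        kcoef F (enum B ((κ : ℕ) / s)) ((σ κ : ℕ) / B.card) ((κ : ℕ) % s)) := by
  rw [Matrix.det_apply']
  refine Finset.sum_congr rfl fun σ _ => ?_
  simp only [KpolyB, Matrix.of_apply, KentPoly_eq]
  rw [← monomial_sum_prod, ← C_mul_monomial]
  simp

/-- The scalar matrix whose determinant is the wanted coefficient. -/
def Nmat (F : Type*) [Field F] (s : ℕ) (B : Finset ℕ) :
    Matrix (Fin (s * B.card)) (Fin (s * B.card)) F :=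
  Matrix.of fun ρ κ => if (ρ : ℕ) % B.card = (κ : ℕ) / s then
    kcoef F (enum B ((κ : ℕ) / s)) ((ρ : ℕ) / B.card) ((κ : ℕ) % s) else 0

lemma Nmat_det (F : Type*) [Field F] (s : ℕ) (B : Finset ℕ) (hs : 1 ≤ s) (ht : 1 ≤ B.card)
    (hB : B ⊆ Finset.range s) : (Nmat F s B).det ≠ 0 := by
  intro h0
  obtain ⟨w, hw, hz⟩ := Matrix.exists_vecMul_eq_zero_iff.2 h0
  -- column index attached to a row
  have key : ∀ ρ : Fin (s * B.card), ∃ κ : Fin (s * B.card),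
      (κ : ℕ) / s = (ρ : ℕ) % B.card ∧ (κ : ℕ) % s = (ρ : ℕ) / B.card := by
    intro ρ
    have h1 : (ρ : ℕ) % B.card < B.card := Nat.mod_lt _ ht
    have h2 : (ρ : ℕ) / B.card < s := 
      Nat.div_lt_of_lt_mul (lt_of_lt_of_eq ρ.2 (mul_comm _ _))
    refine ⟨⟨s * ((ρ : ℕ) % B.card) + (ρ : ℕ) / B.card, ?_⟩, ?_, ?_⟩
    · calc _ < s * ((ρ : ℕ) % B.card) + s := by omega
        _ = s * ((ρ : ℕ) % B.card + 1) := by ring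
        _ ≤ _ := Nat.mul_le_mul_left _ h1
    · simp only
      rw [Nat.mul_add_div hs, Nat.div_eq_of_lt h2, add_zero]
    · simp only
      rw [Nat.mul_add_mod, Nat.mod_eq_of_lt h2]
  have ext' : ∀ ρ ρ' : Fin (s * B.card), (ρ : ℕ) % B.card = (ρ' : ℕ) % B.card →
      (ρ : ℕ) / B.card = (ρ' : ℕ) / B.card → ρ = ρ' := by
    intro ρ ρ' h1 h2
    apply Fin.ext
    rw [← Nat.div_add_mod (ρ : ℕ) B.card, h1, h2, Nat.div_add_mod]
  have step : ∀ ρ : Fin (s * B.card),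
      (∀ ρ' : Fin (s * B.card), ρ' ≠ ρ → (ρ' : ℕ) % B.card = (ρ : ℕ) % B.card →
        (ρ' : ℕ) / B.card = enum B ((ρ : ℕ) % B.card) → w ρ' = 0) → w ρ = 0 := by
    intro ρ hρ
    obtain ⟨κ, h1, h2⟩ := key ρ
    have := congrFun hz κ
    rw [Matrix.vecMul, dotProduct, Finset.sum_eq_single ρ] at this
    · simpa [Nmat, kcoef, h1, h2] using this
    · intro ρ' _ hne
      simp only [Nmat, kcoef, Matrix.of_apply, h1, h2]
      split_ifs with a b c
      · exact absurd (ext' _ _ a b) hne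
      · rw [hρ ρ' hne a c, zero_mul]
      · simp
      · simp
    · simp
  have step1 : ∀ ρ : Fin (s * B.card), (ρ : ℕ) / B.card = enum B ((ρ : ℕ) % B.card) → w ρ = 0 := by
    intro ρ h
    exact step ρ fun ρ' hne h1 h2 => absurd (ext' _ _ h1 (h2.trans h.symm)) hne
  apply hw
  funext ρ
  exact step ρ fun ρ' _ h1 h2 => step1 ρ' (by rw [h1]; exact h2)

lemma sum_fin_mul {M : Type*} [AddCommMonoid M] (s t : ℕ) (hs : 1 ≤ s) (f : ℕ → ℕ → M) :
    ∑ κ : Fin (s * t), f ((κ : ℕ) / s) ((κ : ℕ) % s) =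
      ∑ c ∈ Finset.range t, ∑ j ∈ Finset.range s, f c j := by
  rw [Fin.sum_univ_eq_sum_range (fun k => f (k / s) (k % s))]
  induction t with
  | zero => simp
  | succ t ih =>
    rw [mul_add, mul_one, Finset.sum_range_add, ih, Finset.sum_range_succ]
    congr 1
    refine Finset.sum_congr rfl fun j hj => ?_
    have h2 := Finset.mem_range.1 hj
    rw [Nat.mul_add_div hs, Nat.div_eq_of_lt h2, add_zero, Nat.mul_add_mod, Nat.mod_eq_of_lt h2]

/-- `det(K_B)` is a homogeneous polynomial of total degree
`s·t·(t−1)/2`, the coefficient of the monomial `Π_{c=1}^{t} Π_{j=0}^{s−1} x_{b_c,j}^{c−1}`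
in it is nonzero, and in particular `det(K_B) ≠ 0`. -/
theorem statement11 (F : Type*) [Field F] (s t : ℕ) (hs : 1 ≤ s) (ht₁ : 1 ≤ t) (hts : t ≤ s)
    (B : Finset ℕ) (hBsub : B ⊆ Finset.range s) (hcard : B.card = t) :
    ((KpolyB F s B).det).IsHomogeneous (s * t * (t - 1) / 2) ∧
    MvPolynomial.coeff
      (∑ c ∈ Finset.range t, ∑ j ∈ Finset.range s, Finsupp.single (enum B c, j) c)
      ((KpolyB F s B).det) ≠ 0 ∧
    (KpolyB F s B).det ≠ 0 := by
  subst hcard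
  have main : MvPolynomial.coeff
      (∑ c ∈ Finset.range B.card, ∑ j ∈ Finset.range s, Finsupp.single (enum B c, j) c)
      ((KpolyB F s B).det) ≠ 0 := by
    have vinj : ∀ κ κ' : Fin (s * B.card), (enum B ((κ : ℕ) / s), (κ : ℕ) % s) =
        (enum B ((κ' : ℕ) / s), (κ' : ℕ) % s) → κ = κ' := by
      intro κ κ' h
      rw [Prod.mk.injEq] at h
      have h1 := enum_inj B (Nat.div_lt_of_lt_mul κ.2) (Nat.div_lt_of_lt_mul κ'.2) h.1
      apply Fin.ext
      rw [← Nat.div_add_mod (κ : ℕ) s, h1, h.2, Nat.div_add_mod]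
    have ev : ∀ (g : Fin (s * B.card) → ℕ) (κ : Fin (s * B.card)),
        (∑ κ' : Fin (s * B.card), Finsupp.single (enum B ((κ' : ℕ) / s), (κ' : ℕ) % s) (g κ'))
          (enum B ((κ : ℕ) / s), (κ : ℕ) % s) = g κ := by
      intro g κ
      rw [Finsupp.finset_sum_apply, Finset.sum_eq_single κ]
      · simp
      · intro κ' _ hne
        exact Finsupp.single_eq_of_ne (fun h => hne (vinj _ _ h.symm))
      · simp
    convert Nmat_det F s B hs ht₁ hBsub using 1
    rw [← sum_fin_mul s B.card hs (fun c j => Finsupp.single (enum B c, j) c), det_expand,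
      coeff_sum, Matrix.det_apply']
    refine Finset.sum_congr rfl fun σ _ => ?_
    rw [coeff_monomial]
    split_ifs with h
    · congr 1
      refine Finset.prod_congr rfl fun κ _ => ?_
      have := DFunLike.congr_fun h (enum B ((κ : ℕ) / s), (κ : ℕ) % s)
      rw [ev (fun κ => (σ κ : ℕ) % B.card), ev (fun κ => (κ : ℕ) / s)] at this
      simp [Nmat, this]
    · have : ∃ κ : Fin (s * B.card), (σ κ : ℕ) % B.card ≠ (κ : ℕ) / s := by
        by_contra! hc
        exact h (Finset.sum_congr rfl fun κ _ => by rw [hc κ])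
      obtain ⟨κ, hκ⟩ := this
      rw [Finset.prod_eq_zero (Finset.mem_univ κ) (by simp [Nmat, hκ]), mul_zero]
  refine ⟨?_, main, fun h => main (by rw [h, coeff_zero])⟩
  rw [det_expand]
  refine IsHomogeneous.sum _ _ _ fun σ _ => isHomogeneous_monomial _ ?_
  rw [map_sum]
  simp only [Finsupp.degree_single]
  rw [Equiv.sum_comp σ (fun ρ : Fin (s * B.card) => (ρ : ℕ) % B.card)]
  have := sum_fin_mul B.card s ht₁ (fun _ j => j)
  rw [Fin.sum_univ_eq_sum_range (fun k => k % B.card)] at this ⊢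
  rw [mul_comm s B.card, this, Finset.sum_const, Finset.card_range, Finset.sum_range_id,
    smul_eq_mul, mul_comm B.card s, mul_assoc,
    Nat.mul_div_assoc _ (Nat.even_mul_pred_self _).two_dvd]
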